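/- For any positive Radon measure μ on ℝⁿ (with U^μ ≢ +∞) and any set A ⊆ ℝⁿ with c_α(A) > 0, the inner balayage μ^A satisfies μ^A(ℝⁿ) ≤ μ(ℝⁿ). -/

import Mathlib

/-!
The minimality clause of the balayage may be tested with `μ` itself, so `U^σ ≤ U^μ` everywhere, and the
claim becomes the principle of positivity of mass. If `μ` has infinite mass there is nothing to
show. Otherwise, instead of an equilibrium measure of a large ball, Lebesgue measure `λ_R` on the
ball `B(0, R)` serves as test measure. Its potential at `x` is `∫_{B(x, R)} |w|^(α - n) dw`; as the
kernel is radially decreasing this is at most the value at the origin, which by scaling is `R^α c`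
with `0 < c < ∞` (`lintegral_rieszC_ball_le`, `lintegral_rieszC_ball`, `rieszC_unit_ne_top`). For
`‖x‖ < k` the ball `B(x, s + k)` contains `B(0, s)`, so the potential of `λ_{s+k}` is at least
`s^α c` there. Integrating `U^σ ≤ U^μ` against `λ_{s+k}` and applying Tonelli gives
`s^α σ(B(0, k)) ≤ (s + k)^α μ(ℝⁿ)`; let `s → ∞`, then `k → ∞`.

Tonelli is applied to the restriction of `σ` to a ball; this restriction is finite because `U^σ` is
finite at some point.
-/

open MeasureTheory ENNReal Set
noncomputable section

/-- Euclidean space ℝⁿ. -/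
abbrev Eucl (n : ℕ) := EuclideanSpace ℝ (Fin n)

/-- The Riesz kernel `|x - z|^(α - n)` of order `α` on ℝⁿ, with values in `ℝ≥0∞`
(so that the kernel is `∞` on the diagonal). -/
def rieszK (α : ℝ) (n : ℕ) (x z : Eucl n) : ℝ≥0∞ :=
  (ENNReal.ofReal ‖x - z‖) ^ (α - (n : ℝ))

/-- The Riesz potential `U^μ(x) = ∫ |x - z|^(α-n) dμ(z)`. -/
def pot (α : ℝ) (n : ℕ) (μ : Measure (Eucl n)) (x : Eucl n) : ℝ≥0∞ :=
  ∫⁻ z, rieszK α n x z ∂μ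

/-- The mutual Riesz energy `E(μ, ν) = ∬ |x - z|^(α-n) d(μ ⊗ ν)(x, z)`. -/
def energy (α : ℝ) (n : ℕ) (μ ν : Measure (Eucl n)) : ℝ≥0∞ :=
  ∫⁻ x, pot α n ν x ∂μ

/-- The inner Riesz capacity `c_α(A) = 1 / inf {E(μ) : μ carried by A, μ(ℝⁿ) = 1}`. -/
def innerCap (α : ℝ) (n : ℕ) (A : Set (Eucl n)) : ℝ≥0∞ :=
  1 / ⨅ (μ : Measure (Eucl n)) (_ : μ Aᶜ = 0 ∧ μ Set.univ = 1), energy α n μ μ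

/-- `σ` is the inner balayage of `μ` onto `A`: its potential coincides with `U^μ`
nearly everywhere on `A` (i.e. off a subset of `A` of inner capacity zero), and
`U^σ` is pointwise minimal among the potentials of all measures `ξ` with
`U^ξ ≥ U^μ` nearly everywhere on `A`. -/
def IsInnerBalayage (α : ℝ) (n : ℕ) (μ : Measure (Eucl n)) (A : Set (Eucl n))
    (σ : Measure (Eucl n)) : Prop :=
  innerCap α n {x ∈ A | pot α n σ x ≠ pot α n μ x} = 0 ∧
  ∀ ξ : Measure (Eucl n),
    innerCap α n {x ∈ A | ¬ pot α n μ x ≤ pot α n ξ x} = 0 →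
    ∀ x, pot α n σ x ≤ pot α n ξ x

/-- The Riesz kernel as a function of the difference `w = x - z`. -/
def rieszC (α : ℝ) (n : ℕ) (w : Eucl n) : ℝ≥0∞ := (ENNReal.ofReal ‖w‖) ^ (α - (n : ℝ))

lemma measurable_rieszC (α : ℝ) (n : ℕ) : Measurable (rieszC α n) := by
  unfold rieszC; fun_prop

/-- A measure carried by the empty set has no mass, so the infimum is over the empty family. -/
lemma innerCap_empty (α : ℝ) (n : ℕ) : innerCap α n ∅ = 0 := by
  unfold innerCap
  have : (⨅ (μ : Measure (Eucl n)) (_ : μ (∅ : Set (Eucl n))ᶜ = 0 ∧ μ Set.univ = 1),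
      energy α n μ μ) = ⊤ := by
    simp only [iInf_eq_top]
    rintro μ ⟨h0, h1⟩
    rw [compl_empty, h1] at h0
    exact absurd h0 one_ne_zero
  rw [this]; simp

lemma rieszC_anti {α : ℝ} {n : ℕ} (h : α ≤ n) {r : ℝ} {w : Eucl n} (hw : r ≤ ‖w‖) :
    rieszC α n w ≤ (ENNReal.ofReal r) ^ (α - (n : ℝ)) := by
  have h' : 0 ≤ (n : ℝ) - α := by linarith
  rw [rieszC, show α - (n : ℝ) = -((n : ℝ) - α) by ring, ENNReal.rpow_neg, ENNReal.rpow_neg]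
  gcongr

lemma le_rieszC {α : ℝ} {n : ℕ} (h : α ≤ n) {r : ℝ} {w : Eucl n} (hw : ‖w‖ ≤ r) :
    (ENNReal.ofReal r) ^ (α - (n : ℝ)) ≤ rieszC α n w := by
  have h' : 0 ≤ (n : ℝ) - α := by linarith
  rw [rieszC, show α - (n : ℝ) = -((n : ℝ) - α) by ring, ENNReal.rpow_neg, ENNReal.rpow_neg]
  gcongr

/-- Among balls of a given radius, the centred one carries the largest integral of the radially
decreasing kernel. -/
lemma lintegral_rieszC_ball_le {α : ℝ} {n : ℕ} (h : α ≤ n) (x : Eucl n) (R : ℝ) :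
    ∫⁻ w in Metric.ball x R, rieszC α n w ≤ ∫⁻ w in Metric.ball 0 R, rieszC α n w := by
  set S := Metric.ball x R
  set T := Metric.ball (0 : Eucl n) R
  have hS : MeasurableSet S := measurableSet_ball
  have hT : MeasurableSet T := measurableSet_ball
  have hvol : volume (S \ T) = volume (T \ S) := by
    have e : volume S = volume T := Measure.addHaar_ball_center volume x R
    have h1 := measure_inter_add_sdiff (μ := volume) S hT
    have h2 := measure_inter_add_sdiff (μ := volume) T hS
    rw [inter_comm, ← e, ← h1] at h2
    have hf : volume (S ∩ T) ≠ ⊤ :=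
      ((measure_mono inter_subset_left).trans_lt measure_ball_lt_top).ne
    exact ((ENNReal.add_right_inj hf).1 h2).symm
  rw [← lintegral_inter_add_sdiff _ S hT, ← lintegral_inter_add_sdiff _ T hS, inter_comm T S]
  refine add_le_add le_rfl ?_
  calc ∫⁻ w in S \ T, rieszC α n w
      ≤ ∫⁻ _ in S \ T, (ENNReal.ofReal R) ^ (α - (n : ℝ)) := by
        refine setLIntegral_mono' (hS.diff hT) fun w hw => rieszC_anti h ?_
        simpa [T] using hw.2
    _ = ∫⁻ _ in T \ S, (ENNReal.ofReal R) ^ (α - (n : ℝ)) := by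
        rw [setLIntegral_const, setLIntegral_const, hvol]
    _ ≤ ∫⁻ w in T \ S, rieszC α n w := by
        refine setLIntegral_mono' (hT.diff hS) fun w hw => le_rieszC h ?_
        have := hw.1
        simp only [T, mem_ball_zero_iff] at this
        exact this.le

/-- Homogeneity of the kernel: its integral over a centred ball grows like `R^α`. -/
lemma lintegral_rieszC_ball {α : ℝ} {n : ℕ} {R : ℝ} (hR : 0 < R) :
    ∫⁻ w in Metric.ball 0 R, rieszC α n w
      = ENNReal.ofReal (R ^ α) * ∫⁻ w in Metric.ball 0 1, rieszC α n w := by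
  have hm := measurable_rieszC α n
  have key : ∫⁻ w, (Metric.ball (0 : Eucl n) R).indicator (rieszC α n) (R • w)
      = ENNReal.ofReal (R ^ n)⁻¹ * ∫⁻ w in Metric.ball 0 R, rieszC α n w := by
    rw [← lintegral_map (hm.indicator measurableSet_ball) (measurable_const_smul R),
      Measure.map_addHaar_smul volume hR.ne', lintegral_smul_measure,
      lintegral_indicator measurableSet_ball, abs_of_nonneg (by positivity)]
    simp
  have key2 : ∀ w : Eucl n, (Metric.ball (0 : Eucl n) R).indicator (rieszC α n) (R • w)
      = ENNReal.ofReal (R ^ (α - n)) * (Metric.ball (0 : Eucl n) 1).indicator (rieszC α n) w := by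
    intro w
    have hiff : R • w ∈ Metric.ball (0 : Eucl n) R ↔ w ∈ Metric.ball (0 : Eucl n) 1 := by
      simp only [mem_ball_zero_iff, norm_smul, Real.norm_eq_abs, abs_of_pos hR]
      exact mul_lt_iff_lt_one_right hR
    by_cases hw : w ∈ Metric.ball (0 : Eucl n) 1
    · rw [indicator_of_mem (hiff.2 hw), indicator_of_mem hw, rieszC, rieszC, norm_smul,
        Real.norm_eq_abs, abs_of_pos hR, ENNReal.ofReal_mul hR.le,
        ENNReal.mul_rpow_of_ne_top ENNReal.ofReal_ne_top ENNReal.ofReal_ne_top,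
        ENNReal.ofReal_rpow_of_pos hR]
    · rw [indicator_of_notMem (fun h => hw (hiff.1 h)), indicator_of_notMem hw, mul_zero]
  simp_rw [key2] at key
  rw [lintegral_const_mul _ (hm.indicator measurableSet_ball),
    lintegral_indicator measurableSet_ball] at key
  have := congrArg (fun t => ENNReal.ofReal (R ^ n) * t) key
  simp only [← mul_assoc] at this
  rw [← ENNReal.ofReal_mul (by positivity), ← ENNReal.ofReal_mul (by positivity),
    mul_inv_cancel₀ (by positivity), ENNReal.ofReal_one, one_mul, ← Real.rpow_natCast,
    ← Real.rpow_add hR] at this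
  rw [← this]; congr 3; ring

lemma rieszC_unit_ne_top {α : ℝ} {n : ℕ} (hn : 1 ≤ n) (hα : 0 < α) :
    ∫⁻ w in Metric.ball (0 : Eucl n) 1, rieszC α n w ≠ ⊤ := by
  have : NeZero n := ⟨by omega⟩
  have hi : IntegrableOn (fun w : Eucl n => ‖w‖ ^ (α - n)) (Metric.ball 0 1) := by
    refine integrableOn_ball_of_norm_le_rpow (C := 1) (α := n - α) (by simpa using hn)
      (by simpa using hα) ?_ ?_
    · refine Filter.Eventually.of_forall fun w => ?_
      rw [Real.norm_of_nonneg (by positivity), one_mul, neg_sub]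
    · exact (by fun_prop : Measurable fun w : Eucl n => ‖w‖ ^ (α - n)).aestronglyMeasurable
  have he : ∫⁻ w in Metric.ball (0 : Eucl n) 1, rieszC α n w
      = ∫⁻ w in Metric.ball (0 : Eucl n) 1, ENNReal.ofReal (‖w‖ ^ (α - n)) := by
    refine lintegral_congr_ae (ae_restrict_of_ae ?_)
    -- The two integrands differ only at the origin, where the real power takes a junk value.
    filter_upwards [Measure.ae_ne volume (0 : Eucl n)] with w hw
    rw [rieszC, ENNReal.ofReal_rpow_of_pos (norm_pos_iff.2 hw)]
  rw [he]
  exact hi.lintegral_lt_top.ne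

lemma rieszC_unit_ne_zero {α : ℝ} {n : ℕ} (h : α ≤ n) :
    ∫⁻ w in Metric.ball (0 : Eucl n) 1, rieszC α n w ≠ 0 := by
  have h1 : ∫⁻ _ in Metric.ball (0 : Eucl n) 1, 1 ≤
      ∫⁻ w in Metric.ball (0 : Eucl n) 1, rieszC α n w := by
    refine setLIntegral_mono' measurableSet_ball fun w hw => ?_
    have := le_rieszC h (mem_ball_zero_iff.1 hw).le
    simpa using this
  rw [setLIntegral_const, one_mul] at h1
  exact ((Metric.measure_ball_pos volume (0 : Eucl n) one_pos).trans_le h1).ne'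

/-- By Tonelli, integrating `U^ν` over `B(0, R)` is integrating against `ν` the potential of Lebesgue
measure on `B(0, R)`, whose value at `z` is a translated integral of the kernel. -/
lemma lintegral_pot_ball {α : ℝ} {n : ℕ} (ν : Measure (Eucl n)) [SFinite ν] (R : ℝ) :
    ∫⁻ x in Metric.ball 0 R, pot α n ν x
      = ∫⁻ z, (∫⁻ w in Metric.ball z R, rieszC α n w) ∂ν := by
  have hm := measurable_rieszC α n
  unfold pot
  have hK : Measurable (Function.uncurry (rieszK α n)) :=
    hm.comp (measurable_fst.sub measurable_snd)
  rw [lintegral_lintegral_swap hK.aemeasurable]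
  refine lintegral_congr fun z => ?_
  have hk : ∀ x, rieszK α n x z = rieszC α n (z - x) := fun x => by
    rw [rieszK, rieszC, norm_sub_rev]
  simp_rw [hk]
  rw [← lintegral_indicator measurableSet_ball, ← lintegral_indicator measurableSet_ball,
    ← lintegral_sub_left_eq_self ((Metric.ball z R).indicator (rieszC α n)) z]
  refine lintegral_congr fun x => ?_
  have hiff : x ∈ Metric.ball 0 R ↔ z - x ∈ Metric.ball z R := by
    simp [Metric.mem_ball, dist_eq_norm]
  by_cases hx : x ∈ Metric.ball 0 R
  · rw [indicator_of_mem hx, indicator_of_mem (hiff.1 hx)]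
  · rw [indicator_of_notMem hx, indicator_of_notMem fun h => hx (hiff.2 h)]

lemma measure_ball_lt_top_of_pot {α : ℝ} {n : ℕ} (h : α ≤ n) {σ : Measure (Eucl n)}
    {x : Eucl n} (hx : pot α n σ x ≠ ⊤) {k : ℝ} (hk : 0 < k) :
    σ (Metric.ball 0 k) < ⊤ := by
  have h1 : (ENNReal.ofReal (‖x‖ + k)) ^ (α - (n : ℝ)) * σ (Metric.ball 0 k) ≤ pot α n σ x := by
    rw [← setLIntegral_const]
    refine (setLIntegral_mono' measurableSet_ball fun z hz => ?_).trans
      (setLIntegral_le_lintegral _ _)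
    refine le_rieszC (w := x - z) h ((norm_sub_le _ _).trans ?_)
    have := mem_ball_zero_iff.1 hz
    linarith
  have hp : (ENNReal.ofReal (‖x‖ + k)) ^ (α - (n : ℝ)) ≠ 0 := by
    rw [ENNReal.ofReal_rpow_of_pos (by positivity)]
    simp only [ne_eq, ENNReal.ofReal_eq_zero, not_le]
    positivity
  refine lt_top_iff_ne_top.2 fun ht => hx ?_
  rw [ht, ENNReal.mul_top hp] at h1
  exact top_le_iff.1 h1

/-- Principle of positivity of mass for finite `μ`, before letting the radii tend to infinity. -/
lemma rpow_mul_measure_ball_le {α : ℝ} {n : ℕ} (hn : 1 ≤ n) (hα : 0 < α) (h : α ≤ n)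
    {μ σ : Measure (Eucl n)} [IsFiniteMeasure μ] (hμ : ∃ x, pot α n μ x ≠ ⊤)
    (hle : ∀ x, pot α n σ x ≤ pot α n μ x) {k s : ℝ} (hk : 0 < k) (hs : 0 < s) :
    ENNReal.ofReal (s ^ α) * σ (Metric.ball 0 k) ≤ ENNReal.ofReal ((s + k) ^ α) * μ univ := by
  obtain ⟨x₀, hx₀⟩ := hμ
  have : IsFiniteMeasure (σ.restrict (Metric.ball 0 k)) := ⟨by
    rw [Measure.restrict_apply_univ]
    exact measure_ball_lt_top_of_pot h (ne_top_of_le_ne_top hx₀ (hle x₀)) hk⟩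
  set c := ∫⁻ w in Metric.ball (0 : Eucl n) 1, rieszC α n w with hc
  have h1 : ENNReal.ofReal (s ^ α) * c * σ (Metric.ball 0 k)
      ≤ ENNReal.ofReal ((s + k) ^ α) * c * μ univ := by
    calc ENNReal.ofReal (s ^ α) * c * σ (Metric.ball 0 k)
        = ∫⁻ _ in Metric.ball 0 k, (∫⁻ w in Metric.ball 0 s, rieszC α n w) ∂σ := by
          rw [setLIntegral_const, lintegral_rieszC_ball hs]
      _ ≤ ∫⁻ z in Metric.ball 0 k, (∫⁻ w in Metric.ball z (s + k), rieszC α n w) ∂σ := by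
          refine setLIntegral_mono' measurableSet_ball fun z hz => lintegral_mono_set ?_
          refine Metric.ball_subset_ball' ?_
          have := Metric.mem_ball.1 hz
          rw [dist_comm] at this
          linarith
      _ = ∫⁻ x in Metric.ball 0 (s + k), pot α n (σ.restrict (Metric.ball 0 k)) x :=
          (lintegral_pot_ball _ _).symm
      _ ≤ ∫⁻ x in Metric.ball 0 (s + k), pot α n μ x :=
          lintegral_mono fun x => (setLIntegral_le_lintegral _ _).trans (hle x)
      _ = ∫⁻ z, (∫⁻ w in Metric.ball z (s + k), rieszC α n w) ∂μ := lintegral_pot_ball _ _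
      _ ≤ ∫⁻ _, (∫⁻ w in Metric.ball 0 (s + k), rieszC α n w) ∂μ :=
          lintegral_mono fun z => lintegral_rieszC_ball_le h z _
      _ = ENNReal.ofReal ((s + k) ^ α) * c * μ univ := by
          rw [lintegral_const, lintegral_rieszC_ball (by positivity)]
  rw [mul_right_comm, mul_right_comm _ c] at h1
  exact (ENNReal.mul_le_mul_iff_left (rieszC_unit_ne_zero h) (rieszC_unit_ne_top hn hα)).1 h1

/-- The inner balayage does not increase total mass: `μ^A(ℝⁿ) ≤ μ(ℝⁿ)`. -/
theorem innerBalayage_mass_le {n : ℕ} {α : ℝ} (hn : 3 ≤ n) (hα : 0 < α)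
    (hα2 : α ≤ 2) (A : Set (Eucl n)) (hA : innerCap α n A ≠ 0)
    (μ σ : Measure (Eucl n)) [IsLocallyFiniteMeasure μ]
    (hμ : ∃ x, pot α n μ x ≠ ⊤)
    (hσ : IsInnerBalayage α n μ A σ) :
    σ Set.univ ≤ μ Set.univ := by
  have h : α ≤ n := by
    have : (3 : ℝ) ≤ n := by exact_mod_cast hn
    linarith
  have hle : ∀ x, pot α n σ x ≤ pot α n μ x := hσ.2 μ (by simp [innerCap_empty])
  rcases eq_or_ne (μ univ) ⊤ with ht | ht
  · rw [ht]; exact le_top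
  have : IsFiniteMeasure μ := ⟨lt_top_iff_ne_top.2 ht⟩
  have hball : ∀ k : ℝ, 0 < k → σ (Metric.ball 0 k) ≤ μ univ := by
    intro k hk
    have hlim : Filter.Tendsto (fun s : ℝ => ENNReal.ofReal ((1 + k / s) ^ α) * μ univ)
        Filter.atTop (nhds (μ univ)) := by
      have h0 : Filter.Tendsto (fun s : ℝ => 1 + k / s) Filter.atTop (nhds 1) := by
        simpa using (tendsto_const_nhds (x := (1 : ℝ))).add
          ((tendsto_const_nhds (x := k)).div_atTop Filter.tendsto_id)
      have h1 := ENNReal.tendsto_ofReal (h0.rpow_const (p := α) (Or.inl one_ne_zero))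
      simpa using ENNReal.Tendsto.mul_const h1 (Or.inr ht)
    refine ge_of_tendsto hlim ?_
    filter_upwards [Filter.eventually_gt_atTop 0] with s hs
    have h1 := rpow_mul_measure_ball_le (by omega) hα h hμ hle hk hs
    have h2 : (s + k) ^ α = s ^ α * (1 + k / s) ^ α := by
      rw [← Real.mul_rpow hs.le (by positivity)]
      congr 1; field_simp
    rw [h2, ENNReal.ofReal_mul (by positivity), mul_assoc] at h1
    refine (ENNReal.mul_le_mul_iff_right ?_ ENNReal.ofReal_ne_top).1 h1
    simp only [ne_eq, ENNReal.ofReal_eq_zero, not_le]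
    positivity
  have hU : (⋃ k : ℕ, Metric.ball (0 : Eucl n) (k + 1 : ℝ)) = univ := by
    refine eq_univ_of_forall fun x => mem_iUnion.2 ?_
    obtain ⟨k, hk⟩ := exists_nat_gt ‖x‖
    exact ⟨k, mem_ball_zero_iff.2 (by linarith)⟩
  have hmono : Monotone fun k : ℕ => Metric.ball (0 : Eucl n) (k + 1 : ℝ) := fun a b hab =>
    Metric.ball_subset_ball (by simpa using hab)
  rw [← hU, hmono.measure_iUnion]
  exact iSup_le fun k => (hball _ (by positivity)).trans_eq (by rw [hU])
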